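/- arXiv:2105.10043 — 6 statements merged into one kernel-verified Lean document; each statement's English description precedes it below -/
import Mathlib

section
/- Let x⁰ be a weighted graph on a finite set V satisfying the subtour-elimination LP constraints: Σ_{u ∈ V} x⁰ u v = 2 for every v ∈ V, and x⁰(δ(S)) ≥ 2 for every S with ∅ ≠ S ⊊ V. Suppose u₀, v₀ ∈ V are distinct with x⁰ u₀ v₀ = 1, and let x be equal to x⁰ except that x u₀ v₀ = x v₀ u₀ = 0. Then x lies in the spanning tree polytope of the complete graph on V: x(E(V)) = |V| − 1, and x(E(S)) ≤ |S| − 1 for every nonempty S ⊆ V. -/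
open scoped BigOperators

/-- The cut value `x(δ(S)) = ∑_{u ∈ S, v ∉ S} x u v`. -/
noncomputable def cutVal {V : Type*} [Fintype V] [DecidableEq V] (x : V → V → ℝ) (S : Finset V) : ℝ :=
  ∑ u ∈ S, ∑ v ∈ Sᶜ, x u v

/-- `x(E(S)) = (1/2) ∑_{u ∈ S, v ∈ S} x u v`, counting each unordered pair inside `S` once. -/
noncomputable def insideVal {V : Type*} (x : V → V → ℝ) (S : Finset V) : ℝ :=
  (1 / 2) * ∑ u ∈ S, ∑ v ∈ S, x u v

/-- Handshake identity: in a 2-regular weighted graph, `2 x(E(S)) + x(δ(S)) = 2 |S|`. -/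
theorem two_mul_insideVal_add_cutVal {V : Type*} [Fintype V] [DecidableEq V] {x : V → V → ℝ}
    (hdeg : ∀ u, ∑ v, x u v = 2) (S : Finset V) :
    2 * insideVal x S + cutVal x S = 2 * S.card := by
  have h : ∑ u ∈ S, (∑ v ∈ S, x u v + ∑ v ∈ Sᶜ, x u v) = ∑ u ∈ S, (2 : ℝ) :=
    Finset.sum_congr rfl fun u _ => by rw [Finset.sum_add_sum_compl, hdeg]
  rw [Finset.sum_add_distrib, Finset.sum_const, nsmul_eq_mul] at h
  unfold insideVal cutVal
  linarith

theorem insideVal_mono {V : Type*} {x y : V → V → ℝ} (h : ∀ u v, x u v ≤ y u v)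
    (S : Finset V) : insideVal x S ≤ insideVal y S :=
  mul_le_mul_of_nonneg_left
    (Finset.sum_le_sum fun u _ => Finset.sum_le_sum fun v _ => h u v) (by norm_num)

/-- If `x⁰` satisfies the subtour-elimination LP constraints, `x⁰ u₀ v₀ = 1` for distinct
`u₀, v₀`, and `x` is `x⁰` with the edge `{u₀, v₀}` zeroed out, then `x` lies in the
spanning tree polytope of the complete graph on `V`. -/
theorem stmt_0 {V : Type*} [Fintype V] [DecidableEq V]
    (x0 x : V → V → ℝ)
    (hsymm : ∀ u v, x0 u v = x0 v u)
    (hnonneg : ∀ u v, 0 ≤ x0 u v)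
    (hdiag : ∀ v, x0 v v = 0)
    (hdeg : ∀ v, ∑ u, x0 u v = 2)
    (hcut : ∀ S : Finset V, S.Nonempty → S ≠ Finset.univ → 2 ≤ cutVal x0 S)
    (u0 v0 : V) (huv : u0 ≠ v0) (he0 : x0 u0 v0 = 1)
    (hx : ∀ u v, x u v =
      if (u = u0 ∧ v = v0) ∨ (u = v0 ∧ v = u0) then 0 else x0 u v) :
    insideVal x (Finset.univ : Finset V) = (Fintype.card V : ℝ) - 1 ∧
      ∀ S : Finset V, S.Nonempty → insideVal x S ≤ (S.card : ℝ) - 1 := by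
  have hhand := two_mul_insideVal_add_cutVal (x := x0) fun u => by
    simpa only [hsymm u] using hdeg u
  have hsub : ∀ u v, x u v = x0 u v - (if u = u0 then if v = v0 then 1 else 0 else 0)
      - (if u = v0 then if v = u0 then 1 else 0 else 0) := by
    intro u v
    have he0' : x0 v0 u0 = 1 := hsymm v0 u0 ▸ he0
    rw [hx]
    grind
  have huniv : insideVal x (Finset.univ : Finset V) = (Fintype.card V : ℝ) - 1 := by
    have h := hhand Finset.univ
    simp only [cutVal, Finset.compl_univ, Finset.sum_empty, Finset.sum_const_zero,
      Finset.card_univ] at h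
    have hx' : insideVal x Finset.univ = insideVal x0 Finset.univ - 1 := by
      simp only [insideVal, hsub, Finset.sum_sub_distrib, Finset.sum_ite_irrel,
        Finset.sum_ite_eq', Finset.mem_univ, if_true, Finset.sum_const_zero]
      ring
    linarith
  refine ⟨huniv, fun S hS => ?_⟩
  by_cases hSu : S = Finset.univ
  · rw [hSu, huniv, Finset.card_univ]
  · have hle : ∀ u v, x u v ≤ x0 u v := by
      intro u v
      rw [hx]
      split_ifs
      exacts [hnonneg u v, le_rfl]
    linarith [insideVal_mono hle S, hhand S, hcut S hS hSu]
end

section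
/- Let x be a fractionally 2-edge-connected weighted graph on a finite set V, and let A, B ⊊ V be two crossing sets each satisfying x(δ(A)) ≤ 2 + ε and x(δ(B)) ≤ 2 + ε for some ε ≥ 0. Then all four corner quantities x(E(A ∩ B, A ∖ B)), x(E(A ∩ B, B ∖ A)), x(E(V ∖ (A ∪ B), A ∖ B)) and x(E(V ∖ (A ∪ B), B ∖ A)) are at least 1 − ε/2. -/
open scoped BigOperators

/-- For disjoint `A, B ⊆ V`, `x(E(A,B)) = ∑_{u ∈ A, v ∈ B} x u v`. -/
noncomputable def btwVal {V : Type*} (x : V → V → ℝ) (A B : Finset V) : ℝ :=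
  ∑ u ∈ A, ∑ v ∈ B, x u v

/-- Two sets `A, B ⊆ V` cross if `A ∩ B`, `A \ B`, `B \ A` and `V \ (A ∪ B)` are all nonempty. -/
def CutCrosses {V : Type*} [Fintype V] [DecidableEq V] (A B : Finset V) : Prop :=
  (A ∩ B).Nonempty ∧ (A \ B).Nonempty ∧ (B \ A).Nonempty ∧ ((A ∪ B)ᶜ).Nonempty

theorem btwVal_comm {V : Type*} {x : V → V → ℝ} (hsymm : ∀ u v, x u v = x v u)
    (S T : Finset V) : btwVal x S T = btwVal x T S := by
  unfold btwVal
  rw [Finset.sum_comm]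
  exact Finset.sum_congr rfl fun _ _ => Finset.sum_congr rfl fun _ _ => hsymm _ _

theorem cutVal_compl {V : Type*} [Fintype V] [DecidableEq V] {x : V → V → ℝ}
    (hsymm : ∀ u v, x u v = x v u) (S : Finset V) : cutVal x Sᶜ = cutVal x S := by
  have h := btwVal_comm hsymm Sᶜ S
  simpa only [cutVal, btwVal, compl_compl] using h

theorem cutVal_eq_btwVal_add {V : Type*} [Fintype V] [DecidableEq V] (x : V → V → ℝ)
    {S T : Finset V} (h : Disjoint S T) :
    cutVal x S = btwVal x S T + btwVal x S (S ∪ T)ᶜ := by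
  have hc : Sᶜ = T ∪ (S ∪ T)ᶜ := by
    ext v
    have : v ∈ S → v ∉ T := fun hv => Finset.disjoint_left.mp h hv
    simp only [Finset.mem_compl, Finset.mem_union]
    tauto
  have hd : Disjoint T (S ∪ T)ᶜ :=
    disjoint_compl_right.mono_left Finset.subset_union_right
  simp only [cutVal, btwVal, hc, Finset.sum_union hd, Finset.sum_add_distrib]

/-- The cut values of two disjoint sets add up to the cut value of their union
plus twice the weight between them. -/
theorem cutVal_add_cutVal {V : Type*} [Fintype V] [DecidableEq V] {x : V → V → ℝ}
    (hsymm : ∀ u v, x u v = x v u) {S T : Finset V} (h : Disjoint S T) :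
    cutVal x S + cutVal x T = cutVal x (S ∪ T) + 2 * btwVal x S T := by
  have hU : cutVal x (S ∪ T) = btwVal x S (S ∪ T)ᶜ + btwVal x T (S ∪ T)ᶜ := by
    simp only [cutVal, btwVal, Finset.sum_union h]
  rw [cutVal_eq_btwVal_add x h, cutVal_eq_btwVal_add x h.symm, Finset.union_comm T S,
    btwVal_comm hsymm T S, hU]
  ring

/-- In a fractionally 2-edge-connected graph, any two nonempty parts of a near-minimum cut
are joined by weight at least `1 - ε / 2`. -/
theorem one_sub_half_le_btwVal {V : Type*} [Fintype V] [DecidableEq V] {x : V → V → ℝ}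
    (hsymm : ∀ u v, x u v = x v u)
    (h2ec : ∀ S : Finset V, S.Nonempty → S ≠ Finset.univ → 2 ≤ cutVal x S)
    {S T : Finset V} (h : Disjoint S T) (hS : S.Nonempty) (hT : T.Nonempty) {ε : ℝ}
    (hcut : cutVal x (S ∪ T) ≤ 2 + ε) : 1 - ε / 2 ≤ btwVal x S T := by
  have hS' : S ≠ Finset.univ := by
    rintro rfl
    exact hT.elim fun v hv => Finset.disjoint_left.mp h (Finset.mem_univ v) hv
  have hT' : T ≠ Finset.univ := by
    rintro rfl
    exact hS.elim fun v hv => Finset.disjoint_left.mp h hv (Finset.mem_univ v)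
  linarith [h2ec S hS hS', h2ec T hT hT', cutVal_add_cutVal hsymm h]

/-- If `A, B` are two crossing `ε`-near minimum cuts of a fractionally 2-edge-connected
weighted graph, then all four corner quantities are at least `1 − ε/2`. -/
theorem stmt_3 {V : Type*} [Fintype V] [DecidableEq V]
    (x : V → V → ℝ)
    (hsymm : ∀ u v, x u v = x v u)
    (hnonneg : ∀ u v, 0 ≤ x u v)
    (hdiag : ∀ v, x v v = 0)
    (h2ec : ∀ S : Finset V, S.Nonempty → S ≠ Finset.univ → 2 ≤ cutVal x S)
    (A B : Finset V) (hA : A ≠ Finset.univ) (hB : B ≠ Finset.univ)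
    (hcross : CutCrosses A B)
    (ε : ℝ) (hε : 0 ≤ ε)
    (hcutA : cutVal x A ≤ 2 + ε) (hcutB : cutVal x B ≤ 2 + ε) :
    1 - ε / 2 ≤ btwVal x (A ∩ B) (A \ B) ∧
    1 - ε / 2 ≤ btwVal x (A ∩ B) (B \ A) ∧
    1 - ε / 2 ≤ btwVal x ((A ∪ B)ᶜ) (A \ B) ∧
    1 - ε / 2 ≤ btwVal x ((A ∪ B)ᶜ) (B \ A) := by
  obtain ⟨hI, hAB, hBA, hO⟩ := hcross
  refine ⟨one_sub_half_le_btwVal hsymm h2ec ?_ hI hAB ?_,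
    one_sub_half_le_btwVal hsymm h2ec ?_ hI hBA ?_,
    one_sub_half_le_btwVal hsymm h2ec ?_ hO hAB ?_,
    one_sub_half_le_btwVal hsymm h2ec ?_ hO hBA ?_⟩
  · exact Finset.disjoint_left.mpr fun v => by simp; tauto
  · rwa [show A ∩ B ∪ A \ B = A by ext v; simp; tauto]
  · exact Finset.disjoint_left.mpr fun v => by simp; tauto
  · rwa [show A ∩ B ∪ B \ A = B by ext v; simp; tauto]
  · exact Finset.disjoint_left.mpr fun v => by simp; tauto
  · rwa [show (A ∪ B)ᶜ ∪ A \ B = Bᶜ by ext v; simp; tauto, cutVal_compl hsymm]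
  · exact Finset.disjoint_left.mpr fun v => by simp; tauto
  · rwa [show (A ∪ B)ᶜ ∪ B \ A = Aᶜ by ext v; simp; tauto, cutVal_compl hsymm]
end

section
/- Let G = (V, E) be a finite simple graph with edge weights x : E → ℝ≥0 and let μ be a distribution over spanning trees of G with marginals x. Let S ⊆ V be a nonempty set such that every vertex v ∈ S satisfies x(δ({v})) = 2, and suppose x(δ(S)) ≤ 2 + ε for some ε ≥ 0. Then the probability under μ that the sampled spanning tree T satisfies |T ∩ E(S)| = |S| − 1 (i.e., T restricted to S is a spanning tree of S) is at least 1 − ε/2. -/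
open scoped BigOperators Classical

/-- The edges of `E` with exactly one endpoint in `S` (the cut `δ(S)`). -/
noncomputable def cutEdges {V : Type*} (E : Finset (Sym2 V)) (S : Finset V) :
    Finset (Sym2 V) :=
  E.filter (fun e => ∃ a b : V, e = s(a, b) ∧ a ∈ S ∧ b ∉ S)

/-- The edges of `E` with both endpoints in `S` (the set `E(S)`). -/
noncomputable def insideEdges {V : Type*} (E : Finset (Sym2 V)) (S : Finset V) :
    Finset (Sym2 V) :=
  E.filter (fun e => ∀ a ∈ e, a ∈ S)

/-- `T` is a spanning tree of the vertex set `V`: the graph on `V` with edge set `T`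
is connected and acyclic. -/
def IsSpanningTree {V : Type*} (T : Finset (Sym2 V)) : Prop :=
  (SimpleGraph.fromEdgeSet (T : Set (Sym2 V))).Connected ∧
    (SimpleGraph.fromEdgeSet (T : Set (Sym2 V))).IsAcyclic

theorem insideEdges_subset {V : Type*} (E : Finset (Sym2 V)) (S : Finset V) :
    insideEdges E S ⊆ E :=
  Finset.filter_subset _ _

/-- An acyclic graph has at most `|S| - 1` edges inside a nonempty vertex set `S`. -/
theorem card_inter_insideEdges_add_one_le {V : Type*} [Fintype V] [DecidableEq V]
    {E T : Finset (Sym2 V)} (hE : ∀ e ∈ E, ¬ e.IsDiag)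
    (hT : (SimpleGraph.fromEdgeSet (T : Set (Sym2 V))).IsAcyclic)
    {S : Finset V} (hS : S.Nonempty) :
    (T ∩ insideEdges E S).card + 1 ≤ S.card := by
  have : Nonempty (S : Set V) := hS.to_subtype
  obtain ⟨F, hle, -, hF⟩ := SimpleGraph.connected_top.exists_isTree_le_of_le_of_isAcyclic
    le_top (hT.induce (S : Set V))
  have hcard := hF.card_edgeFinset
  have hsub : T ∩ insideEdges E S ⊆ F.edgeFinset.image (Sym2.map Subtype.val) := by
    intro e he
    induction e with | h a b
    simp only [insideEdges, Finset.mem_inter, Finset.mem_filter, Sym2.mem_iff,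
      forall_eq_or_imp, forall_eq] at he
    obtain ⟨heT, heE, ha, hb⟩ := he
    refine Finset.mem_image.2 ⟨s(⟨a, ha⟩, ⟨b, hb⟩), ?_, by simp⟩
    rw [SimpleGraph.mem_edgeFinset, SimpleGraph.mem_edgeSet]
    apply hle
    simpa [heT] using hE _ heE
  have h := (Finset.card_le_card hsub).trans Finset.card_image_le
  have : Fintype.card (S : Set V) = S.card := by simp
  omega

/-- Handshake identity for the degrees of the vertices in `S`. -/
theorem sum_sum_cutEdges_singleton {V : Type*}
    {E : Finset (Sym2 V)} (hE : ∀ e ∈ E, ¬ e.IsDiag) (x : Sym2 V → ℝ) (S : Finset V) :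
    ∑ v ∈ S, ∑ e ∈ cutEdges E {v}, x e =
      2 * ∑ e ∈ insideEdges E S, x e + ∑ e ∈ cutEdges E S, x e := by
  simp only [cutEdges, insideEdges, Finset.sum_filter]
  rw [Finset.sum_comm, Finset.mul_sum, ← Finset.sum_add_distrib]
  refine Finset.sum_congr rfl fun e he => ?_
  have hne := hE e he
  induction e with | h a b
  rw [Sym2.mk_isDiag_iff] at hne
  have hcut : ∀ A : Finset V, (∃ c d : V, s(a, b) = s(c, d) ∧ c ∈ A ∧ d ∉ A) ↔
      (a ∈ A ∧ b ∉ A) ∨ (b ∈ A ∧ a ∉ A) := by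
    intro A
    simp only [Sym2.eq_iff]
    grind
  have hv : ∀ v, ((a ∈ ({v} : Finset V) ∧ b ∉ ({v} : Finset V)) ∨
      (b ∈ ({v} : Finset V) ∧ a ∉ ({v} : Finset V))) ↔ a = v ∨ b = v := by
    intro v
    simp only [Finset.mem_singleton]
    grind
  have hsplit : ∀ v, (if a = v ∨ b = v then x s(a, b) else 0) =
      (if a = v then x s(a, b) else 0) + (if b = v then x s(a, b) else 0) := by
    intro v
    grind
  simp only [hcut, hv, hsplit, Finset.sum_add_distrib, Finset.sum_ite_eq, Sym2.mem_iff,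
    forall_eq_or_imp, forall_eq]
  by_cases ha : a ∈ S <;> by_cases hb : b ∈ S <;> simp [ha, hb]
  ring

/-- The expected size of `T ∩ A` is the total marginal weight of `A`. -/
theorem sum_mul_card_inter_eq_sum_marginal {α : Type*} [Fintype α] [DecidableEq α] (μ : Finset α → ℝ)
    (x : α → ℝ) (A : Finset α)
    (h : ∀ e ∈ A, ∑ T ∈ Finset.univ.filter (fun T => e ∈ T), μ T = x e) :
    ∑ T : Finset α, μ T * ((T ∩ A).card : ℝ) = ∑ e ∈ A, x e := by
  rw [← Finset.sum_congr rfl h]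
  simp only [Finset.sum_filter]
  rw [Finset.sum_comm]
  refine Finset.sum_congr rfl fun T _ => ?_
  rw [← Finset.sum_filter, Finset.sum_const, nsmul_eq_mul, mul_comm,
    Finset.filter_mem_eq_inter, Finset.inter_comm]

/-- If `μ` is a distribution over spanning trees of `G = (V, E)` with marginals `x`,
`S` is nonempty, every vertex of `S` has `x(δ(v)) = 2`, and `x(δ(S)) ≤ 2 + ε`, then
with probability at least `1 − ε/2` the sampled tree `T` satisfies
`|T ∩ E(S)| = |S| − 1`, i.e. `T` restricted to `S` is a spanning tree of `S`. -/
theorem stmt_5 {V : Type*} [Fintype V] [DecidableEq V]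
    (E : Finset (Sym2 V)) (hE : ∀ e ∈ E, ¬ e.IsDiag)
    (x : Sym2 V → ℝ) (hx : ∀ e, 0 ≤ x e)
    (μ : Finset (Sym2 V) → ℝ)
    (hμ0 : ∀ T, 0 ≤ μ T)
    (hsupp : ∀ T, μ T ≠ 0 → T ⊆ E ∧ IsSpanningTree T)
    (hsum : ∑ T : Finset (Sym2 V), μ T = 1)
    (hmarg : ∀ e ∈ E, ∑ T ∈ Finset.univ.filter (fun T => e ∈ T), μ T = x e)
    (S : Finset V) (hS : S.Nonempty)
    (hdeg : ∀ v ∈ S, ∑ e ∈ cutEdges E {v}, x e = 2)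
    (ε : ℝ) (hε : 0 ≤ ε)
    (hcut : ∑ e ∈ cutEdges E S, x e ≤ 2 + ε) :
    1 - ε / 2 ≤
      ∑ T ∈ Finset.univ.filter
        (fun T => (T ∩ insideEdges E S).card = S.card - 1), μ T := by
  have hexp := sum_mul_card_inter_eq_sum_marginal μ x (insideEdges E S)
    fun e he => hmarg e (insideEdges_subset E S he)
  have hhand := sum_sum_cutEdges_singleton hE x S
  rw [Finset.sum_congr rfl hdeg, Finset.sum_const, nsmul_eq_mul] at hhand
  have hpoint : ∀ T, μ T * ((T ∩ insideEdges E S).card : ℝ) ≤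
      μ T * ((S.card : ℝ) - 2) +
        if (T ∩ insideEdges E S).card = S.card - 1 then μ T else 0 := by
    intro T
    by_cases hT : μ T = 0
    · simp [hT]
    have hle := card_inter_insideEdges_add_one_le hE (hsupp T hT).2.2 hS
    split_ifs with h
    · have h' : ((T ∩ insideEdges E S).card : ℝ) + 1 ≤ S.card := by exact_mod_cast hle
      nlinarith [mul_le_mul_of_nonneg_left h' (hμ0 T)]
    · have h' : ((T ∩ insideEdges E S).card : ℝ) + 2 ≤ S.card := by
        exact_mod_cast (show (T ∩ insideEdges E S).card + 2 ≤ S.card by omega)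
      nlinarith [mul_le_mul_of_nonneg_left h' (hμ0 T)]
  have htotal := Finset.sum_le_sum fun T (_ : T ∈ Finset.univ) => hpoint T
  rw [Finset.sum_add_distrib, ← Finset.sum_mul, hsum, ← Finset.sum_filter] at htotal
  linarith
end

section
/- Let x be a fractionally 2-edge-connected weighted graph on a finite set V and let η > 0. If C₁, …, C_k are η-near min cuts of x forming a k-cycle, then k ≥ 2/η. -/
open scoped BigOperators

/-- The indicator that the ordered pair `(u, v)` leaves `S`. -/
noncomputable def leaves {V : Type*} [DecidableEq V] (S : Finset V) (u v : V) : ℝ :=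
  if u ∈ S ∧ v ∉ S then 1 else 0

theorem cutVal_eq_sum_leaves {V : Type*} [Fintype V] [DecidableEq V]
    (x : V → V → ℝ) (S : Finset V) :
    cutVal x S = ∑ u, ∑ v, x u v * leaves S u v := by
  simp only [cutVal, leaves, mul_ite, mul_one, mul_zero, ite_and, ← Finset.mem_compl]
  rw [← Finset.sum_subset (Finset.subset_univ S) (fun u _ hu => by simp [hu])]
  refine Finset.sum_congr rfl fun u hu => ?_
  simp [hu, Finset.sum_filter, Finset.compl_eq_univ_sdiff, Finset.sdiff_eq_filter, ite_not]

theorem two_mul_cutVal {V : Type*} [Fintype V] [DecidableEq V]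
    {x : V → V → ℝ} (hsymm : ∀ u v, x u v = x v u) (S : Finset V) :
    2 * cutVal x S = ∑ u, ∑ v, x u v * (leaves S u v + leaves S v u) := by
  have hswap : cutVal x S = ∑ u, ∑ v, x u v * leaves S v u := by
    rw [cutVal_eq_sum_leaves, Finset.sum_comm]
    simp_rw [fun u v => hsymm v u]
  simp_rw [mul_add, Finset.sum_add_distrib]
  rw [← hswap, ← cutVal_eq_sum_leaves]
  ring

/-- If every pair of vertices is separated by the family `A` at least as often as by the family `B`
together with `U`, then the cut values compare accordingly. -/
theorem sum_cutVal_add_le {V ι : Type*} [Fintype V] [DecidableEq V] [Fintype ι]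
    {x : V → V → ℝ} (hsymm : ∀ u v, x u v = x v u) (hnonneg : ∀ u v, 0 ≤ x u v)
    (A B : ι → Finset V) (U : Finset V)
    (h : ∀ u v, ∑ i, (leaves (B i) u v + leaves (B i) v u) + (leaves U u v + leaves U v u) ≤
      ∑ i, (leaves (A i) u v + leaves (A i) v u)) :
    ∑ i, cutVal x (B i) + cutVal x U ≤ ∑ i, cutVal x (A i) := by
  have expand (F : ι → Finset V) : 2 * ∑ i, cutVal x (F i) =
      ∑ u, ∑ v, x u v * ∑ i, (leaves (F i) u v + leaves (F i) v u) := by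
    simp_rw [Finset.mul_sum, two_mul_cutVal hsymm]
    rw [Finset.sum_comm]
    exact Finset.sum_congr rfl fun u _ => Finset.sum_comm
  have hle : 2 * ∑ i, cutVal x (B i) + 2 * cutVal x U ≤ 2 * ∑ i, cutVal x (A i) := by
    rw [expand, expand, two_mul_cutVal hsymm]
    simp_rw [← Finset.sum_add_distrib, ← mul_add]
    exact Finset.sum_le_sum fun u _ => Finset.sum_le_sum fun v _ =>
      mul_le_mul_of_nonneg_left (h u v) (hnonneg u v)
  linarith

/-- The part of `C i ∩ C (i + 1)` outside `C (i - 1)`. -/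
def consecutiveInter {V : Type*} [DecidableEq V] {k : ℕ} (C : ZMod k → Finset V) (i : ZMod k) :
    Finset V :=
  (C i ∩ C (i + 1)) \ C (i - 1)

theorem leaves_consecutiveInter_le_of_three {V : Type*} [DecidableEq V]
    (C : ZMod 3 → Finset V) (u v : V) :
    ∑ i, (leaves (consecutiveInter C i) u v + leaves (consecutiveInter C i) v u) +
      (leaves (Finset.univ.biUnion C) u v + leaves (Finset.univ.biUnion C) v u) ≤
      ∑ i, (leaves (C i) u v + leaves (C i) v u) := by
  have hsum (f : ZMod 3 → ℝ) : ∑ i, f i = f 0 + f 1 + f 2 := Fin.sum_univ_three f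
  have hU (w : V) : w ∈ Finset.univ.biUnion C ↔ w ∈ C 0 ∨ w ∈ C 1 ∨ w ∈ C 2 := by
    rw [Finset.mem_biUnion]
    constructor
    · rintro ⟨i, -, hi⟩
      fin_cases i
      exacts [Or.inl hi, Or.inr (Or.inl hi), Or.inr (Or.inr hi)]
    · rintro (h | h | h)
      exacts [⟨0, Finset.mem_univ _, h⟩, ⟨1, Finset.mem_univ _, h⟩, ⟨2, Finset.mem_univ _, h⟩]
  have h01 : (0 : ZMod 3) - 1 = 2 := by decide
  have h11 : (1 : ZMod 3) + 1 = 2 := by decide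
  have h21 : (2 : ZMod 3) + 1 = 0 := by decide
  have h22 : (2 : ZMod 3) - 1 = 1 := by decide
  simp only [hsum, leaves, consecutiveInter, hU, Finset.mem_sdiff, Finset.mem_inter, h01, h11, h21,
    h22, sub_self, zero_add]
  by_cases a0 : u ∈ C 0 <;> by_cases a1 : u ∈ C 1 <;> by_cases a2 : u ∈ C 2 <;>
    by_cases b0 : v ∈ C 0 <;> by_cases b1 : v ∈ C 1 <;> by_cases b2 : v ∈ C 2 <;>
    norm_num [a0, a1, a2, b0, b1, b2]

theorem natCast_zmod_ne_zero {k n : ℕ} (hn : 0 < n) (hnk : n < k) : (n : ZMod k) ≠ 0 := by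
  rw [Ne, ZMod.natCast_eq_zero_iff]
  exact Nat.not_dvd_of_pos_of_lt hn hnk

theorem disjoint_shift_two {V : Type*} [DecidableEq V] {k : ℕ} (hk : 4 ≤ k)
    {C : ZMod k → Finset V}
    (hdisj : ∀ i j : ZMod k, j ≠ i - 1 → j ≠ i → j ≠ i + 1 → C i ∩ C j = ∅)
    {i : ZMod k} {w : V} (h₁ : w ∈ C (i - 1)) (h₂ : w ∈ C (i + 1)) : False := by
  have one_ne := natCast_zmod_ne_zero (k := k) (n := 1) (by lia) (by lia)
  have two_ne := natCast_zmod_ne_zero (k := k) (n := 2) (by lia) (by lia)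
  have three_ne := natCast_zmod_ne_zero (k := k) (n := 3) (by lia) (by lia)
  push_cast at one_ne two_ne three_ne
  have hempty := hdisj (i - 1) (i + 1)
    (fun h => three_ne (by linear_combination h))
    (fun h => two_ne (by linear_combination h))
    (fun h => one_ne (by linear_combination h))
  have hw := Finset.mem_inter.2 ⟨h₁, h₂⟩
  simp [hempty] at hw

theorem leaves_consecutiveInter_le_of_four_le {V : Type*} [DecidableEq V] {k : ℕ} [NeZero k]
    (hk : 4 ≤ k) {C : ZMod k → Finset V}
    (hdisj : ∀ i j : ZMod k, j ≠ i - 1 → j ≠ i → j ≠ i + 1 → C i ∩ C j = ∅) (u v : V) :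
    ∑ i, leaves (consecutiveInter C i) u v + leaves (Finset.univ.biUnion C) u v ≤
      ∑ i, leaves (C i) u v := by
  have hmem (i : ZMod k) (w : V) : w ∈ consecutiveInter C i ↔ w ∈ C i ∧ w ∈ C (i + 1) := by
    rw [consecutiveInter, Finset.mem_sdiff, Finset.mem_inter, and_iff_left_iff_imp]
    exact fun h h' => disjoint_shift_two hk hdisj h' h.2
  have hunique {i j : ZMod k} (hi : u ∈ consecutiveInter C i) (hj : u ∈ consecutiveInter C j) :
      j = i := by
    rw [hmem] at hi hj
    by_contra hne
    by_cases hpred : j = i - 1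
    · subst hpred
      exact disjoint_shift_two hk hdisj hj.1 hi.2
    by_cases hsucc : j = i + 1
    · subst hsucc
      exact disjoint_shift_two hk hdisj (i := i + 1) (by simpa using hi.1) hj.2
    have hw := Finset.mem_inter.2 ⟨hi.1, hj.1⟩
    simp [hdisj i j hpred hne hsucc] at hw
  have hnn (S : Finset V) : 0 ≤ leaves S u v := by unfold leaves; split_ifs <;> norm_num
  have hsingle (i : ZMod k) : leaves (C i) u v ≤ ∑ j, leaves (C j) u v :=
    Finset.single_le_sum (fun j _ => hnn (C j)) (Finset.mem_univ i)
  have hUout (hv : v ∉ Finset.univ.biUnion C) (i : ZMod k) : v ∉ C i := fun h =>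
    hv (Finset.mem_biUnion.2 ⟨i, Finset.mem_univ i, h⟩)
  by_cases hu : ∃ i, u ∈ consecutiveInter C i
  · obtain ⟨i, hi⟩ := hu
    have hsum : ∑ j, leaves (consecutiveInter C j) u v = leaves (consecutiveInter C i) u v :=
      Finset.sum_eq_single i
        (fun j _ hji => if_neg fun h => hji (hunique hi h.1)) (by simp)
    rw [hsum]
    have hi' := (hmem i u).1 hi
    have hne : i ≠ i + 1 := by
      intro h
      have one_ne := natCast_zmod_ne_zero (k := k) (n := 1) (by lia) (by lia)
      push_cast at one_ne
      exact one_ne (by linear_combination -h)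
    have hpair : leaves (C i) u v + leaves (C (i + 1)) u v ≤ ∑ j, leaves (C j) u v := by
      rw [← Finset.sum_pair (f := fun j => leaves (C j) u v) hne]
      exact Finset.sum_le_sum_of_subset_of_nonneg (Finset.subset_univ _) fun j _ _ => hnn (C j)
    refine le_trans ?_ hpair
    have huU : u ∈ Finset.univ.biUnion C := Finset.mem_biUnion.2 ⟨i, Finset.mem_univ i, hi'.1⟩
    by_cases hv : v ∈ Finset.univ.biUnion C
    · by_cases b₀ : v ∈ C i <;> by_cases b₁ : v ∈ C (i + 1) <;>
        simp [leaves, hmem, hi'.1, hi'.2, hv, b₀, b₁, -Finset.mem_biUnion]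
    · have b₀ := hUout hv i
      have b₁ := hUout hv (i + 1)
      simp [leaves, hmem, hi'.1, hi'.2, huU, hv, b₀, b₁, -Finset.mem_biUnion]
  · have hsum : ∑ j, leaves (consecutiveInter C j) u v = 0 :=
      Finset.sum_eq_zero fun j _ => if_neg fun h => hu ⟨j, h.1⟩
    rw [hsum, zero_add]
    by_cases h : u ∈ Finset.univ.biUnion C ∧ v ∉ Finset.univ.biUnion C
    · obtain ⟨i, -, hi⟩ := Finset.mem_biUnion.1 h.1
      refine le_trans (le_of_eq ?_) (hsingle i)
      rw [leaves, leaves, if_pos h, if_pos ⟨hi, hUout h.2 i⟩]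
    · rw [leaves, if_neg h]
      exact Finset.sum_nonneg fun j _ => hnn (C j)

/-- Any `k`-cycle `C₁, …, C_k` formed by `η`-near min cuts of a fractionally
2-edge-connected weighted graph satisfies `k ≥ 2/η`. Indices are taken mod `k`. -/
theorem stmt_8 {V : Type*} [Fintype V] [DecidableEq V]
    (x : V → V → ℝ)
    (hsymm : ∀ u v, x u v = x v u)
    (hnonneg : ∀ u v, 0 ≤ x u v)
    (hdiag : ∀ v, x v v = 0)
    (h2ec : ∀ S : Finset V, S.Nonempty → S ≠ Finset.univ → 2 ≤ cutVal x S)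
    (η : ℝ) (hη : 0 < η)
    (k : ℕ) (hk : 3 ≤ k) (C : ZMod k → Finset V)
    (hNMC : ∀ i, (C i).Nonempty ∧ C i ≠ Finset.univ ∧ cutVal x (C i) < 2 + η)
    (hcross : ∀ i, CutCrosses (C i) (C (i - 1)) ∧ CutCrosses (C i) (C (i + 1)))
    (hdisj : ∀ i j : ZMod k, j ≠ i - 1 → j ≠ i → j ≠ i + 1 → C i ∩ C j = ∅)
    (hunion : (⋃ i, (C i : Set V)) ≠ (Set.univ : Set V))
    (h3 : k = 3 → ∀ i, ¬ C i ∩ C (i + 1) ⊆ C (i - 1)) :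
    2 / η ≤ (k : ℝ) := by
  have : NeZero k := ⟨by lia⟩
  have hineq : ∑ i, cutVal x (consecutiveInter C i) + cutVal x (Finset.univ.biUnion C) ≤
      ∑ i, cutVal x (C i) := by
    refine sum_cutVal_add_le hsymm hnonneg _ _ _ fun u v => ?_
    rcases hk.eq_or_lt with rfl | hk'
    · exact leaves_consecutiveInter_le_of_three C u v
    · have huv := leaves_consecutiveInter_le_of_four_le hk' hdisj u v
      have hvu := leaves_consecutiveInter_le_of_four_le hk' hdisj v u
      simp_rw [Finset.sum_add_distrib]
      linarith
  have hproper : Finset.univ.biUnion C ≠ Finset.univ := by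
    intro h
    apply hunion
    rw [← Finset.coe_univ, ← h]
    simp
  have hsub (i : ZMod k) : consecutiveInter C i ⊆ C i :=
    Finset.sdiff_subset.trans Finset.inter_subset_left
  have hinter (i : ZMod k) : 2 ≤ cutVal x (consecutiveInter C i) := by
    refine h2ec _ ?_ fun h => (hNMC i).2.1 (Finset.univ_subset_iff.1 (h ▸ hsub i))
    rcases hk.eq_or_lt with hk' | hk'
    · exact Finset.sdiff_nonempty.2 (h3 hk'.symm i)
    · obtain ⟨w, hw⟩ := (hcross i).2.1
      exact ⟨w, Finset.mem_sdiff.2 ⟨hw, fun h =>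
        disjoint_shift_two hk' hdisj h (Finset.mem_inter.1 hw).2⟩⟩
  have hU : 2 ≤ cutVal x (Finset.univ.biUnion C) := by
    refine h2ec _ ?_ hproper
    obtain ⟨w, hw⟩ := (hNMC 0).1
    exact ⟨w, Finset.mem_biUnion.2 ⟨0, Finset.mem_univ _, hw⟩⟩
  have hlower : (k : ℝ) * 2 ≤ ∑ i, cutVal x (consecutiveInter C i) := by
    simpa [ZMod.card] using Finset.sum_le_sum fun i (_ : i ∈ Finset.univ) => hinter i
  have hupper : ∑ i, cutVal x (C i) ≤ (k : ℝ) * 2 + k * η := by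
    simpa [ZMod.card] using Finset.sum_le_sum fun i (_ : i ∈ Finset.univ) => (hNMC i).2.2.le
  rw [div_le_iff₀ hη]
  linarith
end

section
/- Let V be a finite set, let N be a family of cuts of V, and let C and C′ be two distinct connected components of N under the crossing relation. Then there exist an atom a of C and an atom a′ of C′ such that a ∪ a′ = V. -/
open scoped Classical

/-- The crossing relation restricted to the family `N`. -/
def crossRel {V : Type*} [Fintype V] [DecidableEq V] (N : Set (Finset V))
    (A B : Finset V) : Prop :=
  A ∈ N ∧ B ∈ N ∧ CutCrosses A B

/-- `C` is a connected component of the family `N` under the crossing relation: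
it is an equivalence class of `N` under the reflexive–transitive closure of the
crossing relation restricted to `N`. -/
def IsCutComponent {V : Type*} [Fintype V] [DecidableEq V] (N : Set (Finset V))
    (C : Set (Finset V)) : Prop :=
  ∃ S₀ ∈ N, C = {S | S ∈ N ∧ Relation.ReflTransGen (crossRel N) S₀ S}

/-- The atom of the component `C` containing `u`: all vertices that lie in exactly the
same cuts of `C` as `u` does. -/
noncomputable def atomOf {V : Type*} [Fintype V] [DecidableEq V]
    (C : Set (Finset V)) (u : V) : Finset V :=
  Finset.univ.filter (fun v => ∀ S ∈ C, (v ∈ S ↔ u ∈ S))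

/-- `a` is an atom of the component `C`. -/
def IsAtomOf {V : Type*} [Fintype V] [DecidableEq V]
    (C : Set (Finset V)) (a : Finset V) : Prop :=
  ∃ u : V, a = atomOf C u

section

variable {V : Type*} [Fintype V] [DecidableEq V]

theorem CutCrosses.symm {A B : Finset V} (h : CutCrosses A B) : CutCrosses B A := by
  obtain ⟨h₁, h₂, h₃, h₄⟩ := h
  exact ⟨by rwa [Finset.inter_comm], h₃, h₂, by rwa [Finset.union_comm]⟩

theorem crossRel_symm (N : Set (Finset V)) : Std.Symm (crossRel N) :=
  ⟨fun _ _ h => ⟨h.2.1, h.1, h.2.2.symm⟩⟩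

theorem mem_atomOf {C : Set (Finset V)} {u v : V} :
    v ∈ atomOf C u ↔ ∀ S ∈ C, (v ∈ S ↔ u ∈ S) := by
  simp [atomOf]

theorem atomOf_eq_of_mem {C : Set (Finset V)} {u v : V} (h : v ∈ atomOf C u) :
    atomOf C v = atomOf C u := by
  ext w
  rw [mem_atomOf] at h
  simp only [mem_atomOf]
  exact forall₂_congr fun S hS => by rw [h S hS]

/-- Cuts belonging to distinct components do not cross. -/
theorem IsCutComponent.not_cutCrosses {N C C' : Set (Finset V)}
    (hC : IsCutComponent N C) (hC' : IsCutComponent N C') (hne : C ≠ C')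
    {S T : Finset V} (hS : S ∈ C) (hT : T ∈ C') : ¬ CutCrosses S T := by
  intro hST
  obtain ⟨S₀, -, rfl⟩ := hC
  obtain ⟨T₀, -, rfl⟩ := hC'
  have := crossRel_symm N
  have hlink : Relation.ReflTransGen (crossRel N) S₀ T₀ :=
    (hS.2.tail ⟨hS.1, hT.1, hST⟩).trans (Std.Symm.symm _ _ hT.2)
  refine hne (Set.ext fun A => and_congr_right fun _ => ⟨fun h => ?_, hlink.trans⟩)
  exact (Std.Symm.symm _ _ hlink : Relation.ReflTransGen (crossRel N) T₀ S₀).trans h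

/-- If `S` and `T` do not cross, then `S` does not separate `T` or does not separate `Tᶜ`. -/
theorem not_separates_of_not_cutCrosses {S T : Finset V} (h : ¬ CutCrosses S T) :
    (∀ u ∈ T, ∀ v ∈ T, (u ∈ S ↔ v ∈ S)) ∨ (∀ u ∈ Tᶜ, ∀ v ∈ Tᶜ, (u ∈ S ↔ v ∈ S)) := by
  simp only [CutCrosses, Finset.Nonempty, Finset.mem_inter, Finset.mem_sdiff,
    Finset.mem_compl, Finset.mem_union] at h ⊢
  grind

/-- Of two crossing cuts, one cannot leave `T` unseparated while the other leaves `Tᶜ`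
unseparated. -/
theorem CutCrosses.not_separates {S S' T : Finset V} (h : CutCrosses S S')
    (hS : ∀ u ∈ T, ∀ v ∈ T, (u ∈ S ↔ v ∈ S))
    (hS' : ∀ u ∈ Tᶜ, ∀ v ∈ Tᶜ, (u ∈ S' ↔ v ∈ S')) : False := by
  obtain ⟨⟨a, ha⟩, ⟨b, hb⟩, ⟨c, hc⟩, ⟨d, hd⟩⟩ := h
  simp only [Finset.mem_inter, Finset.mem_sdiff, Finset.mem_compl, Finset.mem_union]
    at ha hb hc hd hS'
  by_cases ha' : a ∈ T <;> by_cases hb' : b ∈ T <;> grind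

/-- A cut crossing no member of a component has a side contained in an atom of it. -/
theorem IsCutComponent.exists_side_subset_atomOf {N C : Set (Finset V)}
    (hC : IsCutComponent N C) {T : Finset V} (hT : T.Nonempty) (hT' : Tᶜ.Nonempty)
    (h : ∀ S ∈ C, ¬ CutCrosses S T) :
    ∃ u, T ⊆ atomOf C u ∨ Tᶜ ⊆ atomOf C u := by
  obtain ⟨S₀, hS₀, rfl⟩ := hC
  have hsep := fun S hS => not_separates_of_not_cutCrosses (h S hS)
  rcases hsep S₀ ⟨hS₀, .refl⟩ with h₀ | h₀
  · obtain ⟨u, hu⟩ := hT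
    refine ⟨u, Or.inl fun v hv => mem_atomOf.2 fun S hS => ?_⟩
    suffices ∀ u ∈ T, ∀ v ∈ T, (u ∈ S ↔ v ∈ S) from this v hv u hu
    obtain ⟨-, hr⟩ := hS
    induction hr with
    | refl => exact h₀
    | tail hr hst ih =>
      exact (hsep _ ⟨hst.2.1, hr.tail hst⟩).resolve_right (hst.2.2.not_separates ih)
  · obtain ⟨u, hu⟩ := hT'
    refine ⟨u, Or.inr fun v hv => mem_atomOf.2 fun S hS => ?_⟩
    suffices ∀ u ∈ Tᶜ, ∀ v ∈ Tᶜ, (u ∈ S ↔ v ∈ S) from this v hv u hu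
    obtain ⟨-, hr⟩ := hS
    induction hr with
    | refl => exact h₀
    | tail hr hst ih =>
      exact (hsep _ ⟨hst.2.1, hr.tail hst⟩).resolve_left
        fun hl => hst.2.2.symm.not_separates hl ih

/-- Sides of two crossing cuts that lie in atoms lie in the same atom. -/
theorem CutCrosses.atomOf_eq {C : Set (Finset V)} {T T' : Finset V} (h : CutCrosses T T')
    {u v : V} (hu : T ⊆ atomOf C u ∨ Tᶜ ⊆ atomOf C u)
    (hv : T' ⊆ atomOf C v ∨ T'ᶜ ⊆ atomOf C v) : atomOf C v = atomOf C u := by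
  obtain ⟨w, hwu, hwv⟩ : ∃ w, w ∈ atomOf C u ∧ w ∈ atomOf C v := by
    obtain ⟨⟨a, ha⟩, ⟨b, hb⟩, ⟨c, hc⟩, ⟨d, hd⟩⟩ := h
    simp only [Finset.mem_inter, Finset.mem_sdiff, Finset.mem_compl, Finset.mem_union]
      at ha hb hc hd
    simp only [Finset.subset_iff, Finset.mem_compl] at hu hv
    grind
  rw [← atomOf_eq_of_mem hwu, ← atomOf_eq_of_mem hwv]

end

/-- If `C` and `C'` are two distinct connected components of a family `N` of cuts of a
finite set `V`, then there exist an atom `a` of `C` and an atom `a'` of `C'` with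
`a ∪ a' = V`. -/
theorem stmt_9 {V : Type*} [Fintype V] [DecidableEq V]
    (N : Set (Finset V)) (hN : ∀ S ∈ N, S.Nonempty ∧ S ≠ Finset.univ)
    (C C' : Set (Finset V))
    (hC : IsCutComponent N C) (hC' : IsCutComponent N C')
    (hne : C ≠ C') :
    ∃ a a' : Finset V, IsAtomOf C a ∧ IsAtomOf C' a' ∧ a ∪ a' = Finset.univ := by
  have hside : ∀ T ∈ C', ∃ u, T ⊆ atomOf C u ∨ Tᶜ ⊆ atomOf C u := fun T hT => by
    have hTN : T ∈ N := by
      obtain ⟨T₀, -, rfl⟩ := hC'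
      exact hT.1
    refine hC.exists_side_subset_atomOf (hN T hTN).1 ?_
      fun S hS => hC.not_cutCrosses hC' hne hS hT
    rw [Finset.nonempty_iff_ne_empty, Ne, Finset.compl_eq_empty_iff]
    exact (hN T hTN).2
  obtain ⟨u, hu⟩ : ∃ u, ∀ T ∈ C', T ⊆ atomOf C u ∨ Tᶜ ⊆ atomOf C u := by
    obtain ⟨T₀, hT₀, rfl⟩ := hC'
    obtain ⟨u, hu⟩ := hside T₀ ⟨hT₀, .refl⟩
    refine ⟨u, fun T hT => ?_⟩
    obtain ⟨-, hr⟩ := hT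
    induction hr with
    | refl => exact hu
    | tail hr hst ih =>
      obtain ⟨v, hv⟩ := hside _ ⟨hst.2.1, hr.tail hst⟩
      rw [← hst.2.2.atomOf_eq ih hv]
      exact hv
  obtain ⟨w, hw⟩ : ∃ w, ∀ x ∉ atomOf C u, x ∈ atomOf C' w := by
    by_cases hex : ∃ w, w ∉ atomOf C u
    · obtain ⟨w, hw⟩ := hex
      refine ⟨w, fun x hx => mem_atomOf.2 fun T hT => ?_⟩
      have := hu T hT
      simp only [Finset.subset_iff, Finset.mem_compl] at this
      grind
    · exact ⟨u, fun x hx => absurd ⟨x, hx⟩ hex⟩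
  refine ⟨_, _, ⟨u, rfl⟩, ⟨w, rfl⟩, Finset.eq_univ_of_forall fun x => ?_⟩
  rw [Finset.mem_union]
  exact or_iff_not_imp_left.2 (hw x)
end

section
/- Let x be a fractionally 2-edge-connected weighted graph on a finite set V and let η ≥ 0. Let N be the family of all η-near min cuts of x, and let C be a connected component of N under the crossing relation. Suppose B is an η-near min cut of x that is a union of atoms of C, containing at least 2 atoms of C and at most |A(C)| − 2 atoms of C, where A(C) is the set of all atoms of C. Then B ∈ C. -/
open scoped BigOperators Classical

/-- `S` does not separate any two points of `D`. -/
def ConstantOn {V : Type*} (S D : Finset V) : Prop :=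
  ∀ u ∈ D, ∀ v ∈ D, (u ∈ S ↔ v ∈ S)

section

variable {V : Type*} [Fintype V] [DecidableEq V]

lemma constantOn_or_of_not_cutCrosses {S B : Finset V} (h : ¬ CutCrosses S B) :
    ConstantOn S B ∨ ConstantOn S Bᶜ := by
  by_contra hc
  simp only [ConstantOn, not_or, not_forall] at hc
  obtain ⟨⟨u, hu, v, hv, huv⟩, ⟨w, hw, z, hz, hwz⟩⟩ := hc
  apply h
  simp only [CutCrosses, Finset.Nonempty, Finset.mem_inter, Finset.mem_sdiff,
    Finset.mem_compl, Finset.mem_union] at *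
  grind

lemma not_cutCrosses_of_constantOn {S T D : Finset V}
    (hS : ConstantOn S D) (hT : ConstantOn T Dᶜ) : ¬ CutCrosses S T := by
  rintro ⟨⟨a, ha⟩, ⟨b, hb⟩, ⟨c, hc⟩, ⟨d, hd⟩⟩
  simp only [ConstantOn, Finset.mem_inter, Finset.mem_sdiff,
    Finset.mem_compl, Finset.mem_union] at *
  by_cases a ∈ D <;> by_cases b ∈ D <;> by_cases c ∈ D <;> by_cases d ∈ D <;> grind

/-- If every cut reachable from `S₀` is constant on `D` or on `Dᶜ`, and `S₀` is constant on `D`,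
then every cut reachable from `S₀` is constant on `D`. -/
lemma forall_constantOn_of_reflTransGen {N : Set (Finset V)} {S₀ D : Finset V}
    (h : ∀ S, S ∈ N → Relation.ReflTransGen (crossRel N) S₀ S →
      ConstantOn S D ∨ ConstantOn S Dᶜ)
    (h₀ : ConstantOn S₀ D) {S : Finset V} (hS : Relation.ReflTransGen (crossRel N) S₀ S) :
    ConstantOn S D := by
  induction hS with
  | refl => exact h₀
  | tail hST hcross ih =>
    exact (h _ hcross.2.1 (hST.tail hcross)).resolve_right
      fun hT => not_cutCrosses_of_constantOn ih hT hcross.2.2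

lemma card_image_atomOf_le_one {C : Set (Finset V)} {D : Finset V}
    (h : ∀ S ∈ C, ConstantOn S D) : (D.image (atomOf C)).card ≤ 1 := by
  refine Finset.card_le_one.2 ?_
  simp only [Finset.forall_mem_image]
  intro u hu v hv
  ext w
  simp only [atomOf, Finset.mem_filter, Finset.mem_univ, true_and]
  exact forall₂_congr fun S hS => by rw [h S hS u hu v hv]

end

/-- Let `N` be the family of all `η`-near min cuts of a fractionally 2-edge-connected
weighted graph and `C` a connected component of `N`. If `B` is an `η`-near min cut
that is a union of atoms of `C`, containing at least `2` and at most `|A(C)| − 2`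
of the atoms of `C`, then `B ∈ C`. -/
theorem stmt_10 {V : Type*} [Fintype V] [DecidableEq V]
    (x : V → V → ℝ)
    (hsymm : ∀ u v, x u v = x v u)
    (hnonneg : ∀ u v, 0 ≤ x u v)
    (hdiag : ∀ v, x v v = 0)
    (h2ec : ∀ S : Finset V, S.Nonempty → S ≠ Finset.univ → 2 ≤ cutVal x S)
    (η : ℝ) (hη : 0 ≤ η)
    (N : Set (Finset V))
    (hNdef : N = {S : Finset V | S.Nonempty ∧ S ≠ Finset.univ ∧ cutVal x S < 2 + η})
    (C : Set (Finset V)) (hC : IsCutComponent N C)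
    (B : Finset V)
    (hBne : B.Nonempty) (hBuniv : B ≠ Finset.univ) (hBcut : cutVal x B < 2 + η)
    (hBunionAtoms : ∀ u ∈ B, atomOf C u ⊆ B)
    (hBlower : 2 ≤ (B.image (atomOf C)).card)
    (hBupper : (B.image (atomOf C)).card ≤ (Finset.univ.image (atomOf C)).card - 2) :
    B ∈ C := by
  have hBN : B ∈ N := by rw [hNdef]; exact ⟨hBne, hBuniv, hBcut⟩
  obtain ⟨S₀, hS₀, rfl⟩ := hC
  by_contra hB
  have hside : ∀ S, S ∈ N → Relation.ReflTransGen (crossRel N) S₀ S →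
      ConstantOn S B ∨ ConstantOn S Bᶜ := fun S hS hS₀S =>
    constantOn_or_of_not_cutCrosses fun hcross => hB ⟨hBN, hS₀S.tail ⟨hS, hBN, hcross⟩⟩
  rcases hside S₀ hS₀ .refl with h₀ | h₀
  · have := card_image_atomOf_le_one (D := B)
      (fun S (hS : S ∈ {S | S ∈ N ∧ Relation.ReflTransGen (crossRel N) S₀ S}) =>
        forall_constantOn_of_reflTransGen hside h₀ hS.2)
    omega
  · have hcompl := card_image_atomOf_le_one (D := Bᶜ)
      (fun S (hS : S ∈ {S | S ∈ N ∧ Relation.ReflTransGen (crossRel N) S₀ S}) =>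
        forall_constantOn_of_reflTransGen
          (fun T hT hS₀T => by rw [compl_compl]; exact (hside T hT hS₀T).symm) h₀ hS.2)
    rw [← Finset.union_compl B, Finset.image_union] at hBupper
    have := Finset.card_union_le
      (B.image (atomOf {S | S ∈ N ∧ Relation.ReflTransGen (crossRel N) S₀ S}))
      (Bᶜ.image (atomOf {S | S ∈ N ∧ Relation.ReflTransGen (crossRel N) S₀ S}))
    omega
end
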